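/- Let f₁, f₂ ∈ C_c^∞((0,∞)) be complex-valued. Define the Laplace convolution F(t) = ∫₀^t conj(f₁(s)) f₂(t-s) ds for t > 0, the function Ω(x) = F(e^x) for x ∈ ℝ (which belongs to C_c^∞(ℝ)), and g_j(ξ) = Γ(1/2 + iξ) · (M f_j)(ξ) for j = 1, 2, where (M f)(ξ) = (2π)^{-1/2} ∫₀^∞ f(t) t^{-1/2 - iξ} dt is the Mellin transform and Γ is the complex Gamma function. Then for every ξ ∈ ℝ, √(2π) · Γ(1 + iξ) · (Φ Ω)(ξ) = ∫_ℝ conj(g₁(η - ξ)) g₂(η) dη, where (Φ Ω)(ξ) = (2π)^{-1/2} ∫_ℝ Ω(x) e^{-ixξ} dx is the Fourier transform. -/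

import Mathlib

open MeasureTheory
open scoped ComplexOrder

noncomputable section

/-- Complex-valued test functions: smooth, compactly supported, support inside `(0,∞)`. -/
def IsTestFun (f : ℝ → ℂ) : Prop :=
  ContDiff ℝ (⊤ : ℕ∞) f ∧ HasCompactSupport f ∧ tsupport f ⊆ Set.Ioi 0

/-- The Mellin transform `(M f)(ξ) = (2π)^{-1/2} ∫₀^∞ f(t) t^{-1/2 - iξ} dt`. -/
def mellinT (f : ℝ → ℂ) (ξ : ℝ) : ℂ :=
  (Real.sqrt (2 * Real.pi) : ℂ)⁻¹ *
    ∫ t in Set.Ioi (0:ℝ), f t * (t : ℂ) ^ ((-(1/2) : ℂ) - Complex.I * ξ)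

/-- The Laplace convolution `F(t) = ∫₀^t conj(f₁(s)) f₂(t-s) ds`. -/
def laplaceConv (f₁ f₂ : ℝ → ℂ) (t : ℝ) : ℂ :=
  ∫ s in (0:ℝ)..t, (starRingEnd ℂ) (f₁ s) * f₂ (t - s)

/-- The Laplace transform `p ↦ ∫₀^∞ e^{-pt} f(t) dt`, at real `p`. -/
def laplaceT (f : ℝ → ℂ) (p : ℝ) : ℂ :=
  ∫ t in Set.Ioi (0 : ℝ), (Real.exp (-(p * t)) : ℂ) * f t

theorem integrableOn_rpow_mul_exp_neg_mul {σ t : ℝ} (hσ : 0 < σ) (ht : 0 < t) :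
    IntegrableOn (fun p : ℝ => p ^ (σ - 1) * Real.exp (-(t * p))) (Set.Ioi 0) := by
  simpa using integrableOn_rpow_mul_exp_neg_mul_rpow (s := σ - 1) (by linarith) one_pos ht

theorem integrable_mellin_laplace_kernel {f : ℝ → ℂ} {s : ℂ} (hs : 0 < s.re)
    (hfm : AEStronglyMeasurable f (volume.restrict (Set.Ioi 0)))
    (hf : MellinConvergent f (1 - s)) :
    Integrable (fun z : ℝ × ℝ => (z.1 : ℂ) ^ (s - 1) * ((Real.exp (-(z.1 * z.2)) : ℂ) * f z.2))
      ((volume.restrict (Set.Ioi 0)).prod (volume.restrict (Set.Ioi 0))) := by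
  have hnorm : ∀ p ∈ Set.Ioi (0 : ℝ), ∀ t : ℝ,
      ‖(p : ℂ) ^ (s - 1) * ((Real.exp (-(p * t)) : ℂ) * f t)‖ =
        p ^ (s.re - 1) * Real.exp (-(t * p)) * ‖f t‖ := by
    intro p hp t
    rw [norm_mul, norm_mul, Complex.norm_cpow_eq_rpow_re_of_pos hp,
      Complex.norm_of_nonneg (Real.exp_pos _).le, mul_comm p t]
    simp [mul_assoc]
  have hmeas : AEStronglyMeasurable
      (fun z : ℝ × ℝ => (z.1 : ℂ) ^ (s - 1) * ((Real.exp (-(z.1 * z.2)) : ℂ) * f z.2))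
      ((volume.restrict (Set.Ioi 0)).prod (volume.restrict (Set.Ioi 0))) := by
    refine AEStronglyMeasurable.mul ?_ (AEStronglyMeasurable.mul ?_ hfm.comp_snd)
    · exact Measurable.aestronglyMeasurable (by fun_prop)
    · exact Measurable.aestronglyMeasurable (by fun_prop)
  rw [integrable_prod_iff' hmeas]
  refine ⟨?_, ?_⟩
  · filter_upwards [ae_restrict_mem measurableSet_Ioi, hmeas.prodMk_right] with t ht htm
    refine (integrable_norm_iff htm).mp (IntegrableOn.congr_fun
      ((integrableOn_rpow_mul_exp_neg_mul hs ht).mul_const ‖f t‖) ?_ measurableSet_Ioi)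
    exact fun p hp => (hnorm p hp t).symm
  · refine IntegrableOn.congr_fun (hf.norm.const_mul (Real.Gamma s.re)) ?_ measurableSet_Ioi
    intro t ht
    have h := Real.integral_rpow_mul_exp_neg_mul_Ioi hs ht
    simp only
    rw [setIntegral_congr_fun measurableSet_Ioi (fun p hp => hnorm p hp t), integral_mul_const, h,
      norm_smul, Complex.norm_cpow_eq_rpow_re_of_pos ht, one_div, Real.inv_rpow (le_of_lt ht),
      ← Real.rpow_neg (le_of_lt ht)]
    simp
    ring

theorem mellinConvergent_laplaceT {f : ℝ → ℂ} {s : ℂ} (hs : 0 < s.re)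
    (hfm : AEStronglyMeasurable f (volume.restrict (Set.Ioi 0)))
    (hf : MellinConvergent f (1 - s)) : MellinConvergent (laplaceT f) s := by
  simpa [MellinConvergent, IntegrableOn, laplaceT, integral_const_mul] using
    (integrable_mellin_laplace_kernel hs hfm hf).integral_prod_left

theorem mellin_laplaceT {f : ℝ → ℂ} {s : ℂ} (hs : 0 < s.re)
    (hfm : AEStronglyMeasurable f (volume.restrict (Set.Ioi 0)))
    (hf : MellinConvergent f (1 - s)) :
    mellin (laplaceT f) s = Complex.Gamma s * mellin f (1 - s) := by
  have h := integral_integral_swap (f := fun p t : ℝ =>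
    (p : ℂ) ^ (s - 1) * ((Real.exp (-(p * t)) : ℂ) * f t))
    (integrable_mellin_laplace_kernel hs hfm hf)
  simp only [integral_const_mul] at h
  simp only [mellin, laplaceT, smul_eq_mul]
  rw [h, ← integral_const_mul]
  refine setIntegral_congr_fun measurableSet_Ioi fun t ht => ?_
  have ht' : (t : ℂ).arg ≠ Real.pi := by
    rw [Complex.arg_ofReal_of_nonneg (le_of_lt ht)]; exact Real.pi_ne_zero.symm
  have hG := Complex.integral_cpow_mul_exp_neg_mul_Ioi hs ht
  rw [one_div, Complex.inv_cpow _ _ ht', ← Complex.cpow_neg] at hG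
  simp only [sub_sub_cancel_left]
  rw [mul_left_comm, mul_comm _ (f t), ← mul_assoc, mul_comm _ (f t), mul_assoc,
    ← hG, ← integral_const_mul]
  refine integral_congr_ae (Filter.Eventually.of_forall fun p => ?_)
  push_cast
  simp only [mul_comm (p : ℂ)]
  ring

theorem integrableOn_exp_neg_mul {f : ℝ → ℂ} (hf : IntegrableOn f (Set.Ioi 0)) {p : ℝ}
    (hp : 0 ≤ p) :
    IntegrableOn (fun t => (Real.exp (-(p * t)) : ℂ) * f t) (Set.Ioi 0) := by
  refine Integrable.bdd_mul (c := 1) hf (Continuous.aestronglyMeasurable (by fun_prop)) ?_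
  filter_upwards [ae_restrict_mem measurableSet_Ioi] with t ht
  rw [Complex.norm_of_nonneg (Real.exp_pos _).le, Real.exp_le_one_iff]
  exact neg_nonpos.mpr (mul_nonneg hp (le_of_lt ht))

theorem continuousAt_laplaceT {f : ℝ → ℂ} (hf : IntegrableOn f (Set.Ioi 0)) {p : ℝ}
    (hp : 0 < p) : ContinuousAt (laplaceT f) p := by
  refine continuousAt_of_dominated (bound := fun t => ‖f t‖) ?_ ?_ hf.norm ?_
  · filter_upwards [lt_mem_nhds hp] with q hq
    exact (integrableOn_exp_neg_mul hf hq.le).aestronglyMeasurable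
  · filter_upwards [lt_mem_nhds hp] with q hq
    filter_upwards [ae_restrict_mem measurableSet_Ioi] with t ht
    rw [norm_mul, Complex.norm_of_nonneg (Real.exp_pos _).le]
    refine mul_le_of_le_one_left (norm_nonneg _) (Real.exp_le_one_iff.mpr ?_)
    exact neg_nonpos.mpr (mul_nonneg hq.le (le_of_lt ht))
  · exact Filter.Eventually.of_forall fun t => Continuous.continuousAt (by fun_prop)

theorem integrableOn_conj {f : ℝ → ℂ} {S : Set ℝ} (hf : IntegrableOn f S) :
    IntegrableOn (fun t => (starRingEnd ℂ) (f t)) S :=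
  (Complex.conjCLE.toContinuousLinearMap).integrable_comp hf

theorem laplaceT_laplaceConv {f₁ f₂ : ℝ → ℂ} (hf₁ : IntegrableOn f₁ (Set.Ioi 0))
    (hf₂ : IntegrableOn f₂ (Set.Ioi 0)) {p : ℝ} (hp : 0 ≤ p) :
    laplaceT (laplaceConv f₁ f₂) p =
      laplaceT (fun t => (starRingEnd ℂ) (f₁ t)) p * laplaceT f₂ p := by
  have h := integral_posConvolution (integrableOn_exp_neg_mul (integrableOn_conj hf₁) hp)
    (integrableOn_exp_neg_mul hf₂ hp) (ContinuousLinearMap.mul ℝ ℂ)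
  simp only [ContinuousLinearMap.mul_apply'] at h
  rw [laplaceT, laplaceT, laplaceT, ← h]
  refine integral_congr_ae (Filter.Eventually.of_forall fun t => ?_)
  simp only [laplaceConv]
  rw [← intervalIntegral.integral_const_mul]
  refine intervalIntegral.integral_congr fun s _ => ?_
  have : Real.exp (-(p * t)) = Real.exp (-(p * s)) * Real.exp (-(p * (t - s))) := by
    rw [← Real.exp_add]; ring_nf
  simp only [this]
  push_cast
  ring

theorem integrableOn_laplaceConv {f₁ f₂ : ℝ → ℂ} (hf₁ : IntegrableOn f₁ (Set.Ioi 0))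
    (hf₂ : IntegrableOn f₂ (Set.Ioi 0)) : IntegrableOn (laplaceConv f₁ f₂) (Set.Ioi 0) := by
  have h := integrable_posConvolution (integrableOn_conj hf₁) hf₂ (ContinuousLinearMap.mul ℝ ℂ)
  rw [posConvolution, integrable_indicator_iff measurableSet_Ioi] at h
  exact h

theorem laplaceConv_eq_zero {f₁ f₂ : ℝ → ℂ} {a : ℝ} (hf₁ : ∀ t < a, f₁ t = 0)
    (hf₂ : ∀ t < 0, f₂ t = 0) {t : ℝ} (ht : t < a) : laplaceConv f₁ f₂ t = 0 := by
  rw [laplaceConv]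
  refine intervalIntegral.integral_zero_ae (Filter.Eventually.of_forall fun s _ => ?_)
  rcases lt_or_ge s a with hs | hs
  · simp [hf₁ s hs]
  · simp [hf₂ (t - s) (by linarith)]

theorem mellinConvergent_of_eq_zero {f : ℝ → ℂ} (hf : IntegrableOn f (Set.Ioi 0)) {a : ℝ}
    (ha : 0 < a) (hfa : ∀ t < a, f t = 0) {s : ℂ} (hs : s.re ≤ 1) : MellinConvergent f s := by
  have h : IntegrableOn (fun t : ℝ => (t : ℂ) ^ (s - 1) • f t) (Set.Ici a) := by
    refine Integrable.bdd_mul (c := a ^ (s.re - 1))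
      (hf.mono_set (Set.Ici_subset_Ioi.mpr ha))
      (Measurable.aestronglyMeasurable (by fun_prop)) ?_
    filter_upwards [ae_restrict_mem measurableSet_Ici] with t ht
    rw [Complex.norm_cpow_eq_rpow_re_of_pos (ha.trans_le ht)]
    exact Real.rpow_le_rpow_of_nonpos ha ht (by simpa using hs)
  refine h.of_forall_sdiff_eq_zero measurableSet_Ioi fun t ht => ?_
  simp [hfa t (not_le.mp ht.2)]

theorem norm_Gamma_le_Gamma_re {s : ℂ} (hs : 0 < s.re) :
    ‖Complex.Gamma s‖ ≤ Real.Gamma s.re := by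
  rw [Complex.Gamma_eq_integral hs, Real.Gamma_eq_integral hs, Complex.GammaIntegral]
  refine (norm_integral_le_integral_norm _).trans_eq
    (setIntegral_congr_fun measurableSet_Ioi fun x hx => ?_)
  rw [norm_mul, Complex.norm_of_nonneg (Real.exp_pos _).le,
    Complex.norm_cpow_eq_rpow_re_of_pos hx]
  simp

theorem integrable_Gamma_vertical {σ : ℝ} (hσ : 0 < σ) :
    Integrable fun η : ℝ => Complex.Gamma (σ + η * Complex.I) := by
  set m : ℝ := min (σ ^ 2) 1
  have hm : 0 < m := lt_min (by positivity) one_pos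
  refine Integrable.mono' (integrable_inv_one_add_sq.const_mul (Real.Gamma (σ + 2) / m)) ?_ ?_
  · refine Continuous.aestronglyMeasurable (continuous_iff_continuousAt.mpr fun η => ?_)
    refine ContinuousAt.comp (g := Complex.Gamma) ?_ (by fun_prop)
    refine (Complex.differentiableAt_Gamma _ fun n h => ?_).continuousAt
    have := congrArg Complex.re h
    simp at this
    have := Nat.cast_nonneg (α := ℝ) n
    linarith
  · refine Filter.Eventually.of_forall fun η => ?_
    set s : ℂ := σ + η * Complex.I with hs
    have hre : s.re = σ := by simp [hs]
    have him : s.im = η := by simp [hs]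
    have h0 : s ≠ 0 := fun h => by simp [h] at hre; linarith
    have h1 : s + 1 ≠ 0 := fun h => by
      have := congrArg Complex.re h; simp [hre] at this; linarith
    have hΓ : Complex.Gamma (s + 1 + 1) = (s + 1) * (s * Complex.Gamma s) := by
      rw [Complex.Gamma_add_one _ h1, Complex.Gamma_add_one _ h0]
    have hle := norm_Gamma_le_Gamma_re (s := s + 1 + 1) (by simp [hre]; linarith)
    have hre2 : (s + 1 + 1).re = σ + 2 := by simp [hre]; ring
    rw [hΓ, norm_mul, norm_mul, hre2] at hle
    have hs1 : ‖s‖ ≤ ‖s + 1‖ := by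
      rw [Complex.norm_def, Complex.norm_def]
      refine Real.sqrt_le_sqrt ?_
      simp only [Complex.normSq_apply, Complex.add_re, Complex.add_im, Complex.one_re,
        Complex.one_im, hre, him]
      nlinarith
    have hsq : m * (1 + η ^ 2) ≤ ‖s‖ * ‖s‖ := by
      rw [Complex.norm_mul_self_eq_normSq, Complex.normSq_apply, hre, him]
      have h1 : m ≤ σ ^ 2 := min_le_left _ _
      have h2 : m ≤ 1 := min_le_right _ _
      nlinarith [sq_nonneg η]
    rw [← div_eq_mul_inv, div_div, le_div_iff₀ (by positivity)]
    calc ‖Complex.Gamma s‖ * (m * (1 + η ^ 2)) ≤ ‖Complex.Gamma s‖ * (‖s‖ * ‖s‖) := by gcongr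
      _ ≤ ‖Complex.Gamma s‖ * (‖s + 1‖ * ‖s‖) := by gcongr
      _ = ‖s + 1‖ * (‖s‖ * ‖Complex.Gamma s‖) := by ring
      _ ≤ _ := hle

theorem norm_mellin_le {f : ℝ → ℂ} (s : ℂ) :
    ‖mellin f s‖ ≤ ∫ t in Set.Ioi (0 : ℝ), t ^ (s.re - 1) * ‖f t‖ := by
  refine (norm_integral_le_integral_norm _).trans_eq
    (setIntegral_congr_fun measurableSet_Ioi fun t ht => ?_)
  rw [norm_smul, Complex.norm_cpow_eq_rpow_re_of_pos ht]
  simp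

theorem continuous_mellin_vertical {f : ℝ → ℂ} {σ : ℝ} (hf : MellinConvergent f σ)
    (hfm : AEStronglyMeasurable f (volume.restrict (Set.Ioi 0))) :
    Continuous fun η : ℝ => mellin f (σ + η * Complex.I) := by
  refine continuous_of_dominated (bound := fun t : ℝ => ‖(t : ℂ) ^ ((σ : ℂ) - 1) • f t‖) ?_ ?_
    hf.norm ?_
  · intro η
    refine AEStronglyMeasurable.smul (f := fun t : ℝ => (t : ℂ) ^ (σ + η * Complex.I - 1)) ?_ hfm
    exact Measurable.aestronglyMeasurable (by fun_prop)
  · intro η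
    filter_upwards [ae_restrict_mem measurableSet_Ioi] with t ht
    rw [norm_smul, norm_smul, Complex.norm_cpow_eq_rpow_re_of_pos ht,
      Complex.norm_cpow_eq_rpow_re_of_pos ht]
    simp
  · filter_upwards [ae_restrict_mem measurableSet_Ioi] with t ht
    have : (t : ℂ) ≠ 0 := Complex.ofReal_ne_zero.mpr (ne_of_gt ht)
    exact (Continuous.const_cpow (by fun_prop) (Or.inl this)).smul continuous_const

theorem verticalIntegrable_mellin_laplaceT {f : ℝ → ℂ} {σ : ℝ} (hσ : 0 < σ)
    (hfm : AEStronglyMeasurable f (volume.restrict (Set.Ioi 0)))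
    (hf : ∀ s : ℂ, s.re = 1 - σ → MellinConvergent f s) :
    Complex.VerticalIntegrable (mellin (laplaceT f)) σ := by
  have h : ∀ η : ℝ, mellin (laplaceT f) (σ + η * Complex.I) =
      Complex.Gamma (σ + η * Complex.I) * mellin f ((1 - σ : ℝ) + (-η : ℝ) * Complex.I) := by
    intro η
    rw [mellin_laplaceT (by simpa using hσ) hfm (hf _ (by simp))]
    congr 2
    push_cast
    ring
  simp only [Complex.VerticalIntegrable, h]
  refine (integrable_Gamma_vertical hσ).mul_bdd
    (c := ∫ t in Set.Ioi (0 : ℝ), t ^ ((1 - σ) - 1) * ‖f t‖) ?_ ?_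
  · exact ((continuous_mellin_vertical (hf _ (by simp)) hfm).comp
      continuous_neg).aestronglyMeasurable
  · refine Filter.Eventually.of_forall fun η => (norm_mellin_le _).trans_eq ?_
    simp

/-- Parseval's formula for the Mellin transform of a product. -/
theorem mellin_mul_eq_integral {g h : ℝ → ℂ} {σ : ℝ} {s : ℂ}
    (hg : MellinConvergent g (s - σ)) (hh : MellinConvergent h σ)
    (hhv : Complex.VerticalIntegrable (mellin h) σ)
    (hhc : ∀ p, 0 < p → ContinuousAt h p) :
    mellin (fun p => g p * h p) s =
      (2 * Real.pi : ℂ)⁻¹ * ∫ η : ℝ,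
        mellin g (s - (σ + η * Complex.I)) * mellin h (σ + η * Complex.I) := by
  have hpow : ∀ p : ℝ, p ∈ Set.Ioi (0 : ℝ) → ∀ η : ℝ,
      (p : ℂ) ^ (s - (σ + η * Complex.I) - 1) =
        (p : ℂ) ^ (s - σ - 1) * (p : ℂ) ^ (-(η * Complex.I)) := by
    intro p hp η
    rw [← Complex.cpow_add _ _ (Complex.ofReal_ne_zero.mpr (ne_of_gt hp))]
    ring_nf
  have hprod : Integrable (fun z : ℝ × ℝ => (z.1 : ℂ) ^ (-(z.2 * Complex.I)) *
      (((z.1 : ℂ) ^ (s - σ - 1) • g z.1) * mellin h (σ + z.2 * Complex.I)))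
      ((volume.restrict (Set.Ioi 0)).prod volume) := by
    refine Integrable.bdd_mul (c := 1) (Integrable.mul_prod hg hhv)
      (Measurable.aestronglyMeasurable (by fun_prop)) ?_
    have : ∀ᵐ z ∂((volume.restrict (Set.Ioi (0 : ℝ))).prod (volume : Measure ℝ)),
        z.1 ∈ Set.Ioi (0 : ℝ) :=
      Measure.quasiMeasurePreserving_fst.ae (ae_restrict_mem measurableSet_Ioi)
    filter_upwards [this] with z hz
    rw [Complex.norm_cpow_eq_rpow_re_of_pos hz]
    simp
  have hswap := integral_integral_swap (f := fun p η : ℝ => (p : ℂ) ^ (-(η * Complex.I)) *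
    (((p : ℂ) ^ (s - σ - 1) • g p) * mellin h (σ + η * Complex.I))) hprod
  have hl : mellin (fun p => g p * h p) s = ∫ p in Set.Ioi (0 : ℝ), (2 * Real.pi : ℂ)⁻¹ *
      ∫ η : ℝ, (p : ℂ) ^ (-(η * Complex.I)) *
      (((p : ℂ) ^ (s - σ - 1) • g p) * mellin h (σ + η * Complex.I)) := by
    refine setIntegral_congr_fun measurableSet_Ioi fun p hp => ?_
    have hinv := mellinInv_mellin_eq σ h hp hh hhv (hhc p hp)
    simp only
    rw [← hinv, mellinInv, Complex.real_smul, smul_eq_mul, mul_left_comm (g p), mul_left_comm]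
    congr 1
    · simp
    · rw [← integral_const_mul, ← integral_const_mul]
      refine integral_congr_ae (Filter.Eventually.of_forall fun η => ?_)
      have : (p : ℂ) ^ (s - 1) * (p : ℂ) ^ (-(σ + η * Complex.I)) =
          (p : ℂ) ^ (s - σ - 1) * (p : ℂ) ^ (-(η * Complex.I)) := by
        rw [← hpow p hp, ← Complex.cpow_add _ _ (Complex.ofReal_ne_zero.mpr (ne_of_gt hp))]
        ring_nf
      simp only [smul_eq_mul]
      linear_combination (g p * mellin h (σ + η * Complex.I)) * this
  rw [hl, integral_const_mul, hswap]
  congr 1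
  refine integral_congr_ae (Filter.Eventually.of_forall fun η => ?_)
  simp only
  rw [mellin.eq_1 g, ← integral_mul_const]
  refine setIntegral_congr_fun measurableSet_Ioi fun p hp => ?_
  simp only [hpow p hp, smul_eq_mul]
  ring

theorem mellin_conj (f : ℝ → ℂ) (s : ℂ) :
    mellin (fun t => (starRingEnd ℂ) (f t)) ((starRingEnd ℂ) s) = (starRingEnd ℂ) (mellin f s) := by
  rw [mellin, mellin, ← integral_conj]
  refine setIntegral_congr_fun measurableSet_Ioi fun t ht => ?_
  have ht' : (t : ℂ).arg ≠ Real.pi := by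
    rw [Complex.arg_ofReal_of_nonneg (le_of_lt ht)]; exact Real.pi_ne_zero.symm
  have := Complex.cpow_conj t (s - 1) ht'
  simp only [map_sub, map_one, Complex.conj_ofReal] at this
  simp [this]

theorem mellinT_eq_mellin (f : ℝ → ℂ) (ξ : ℝ) :
    mellinT f ξ = (Real.sqrt (2 * Real.pi) : ℂ)⁻¹ * mellin f (1 / 2 - Complex.I * ξ) := by
  rw [mellinT, mellin]
  congr 2
  ext t
  rw [smul_eq_mul, mul_comm]
  congr 2
  ring

theorem integral_comp_exp_mul_cexp (F : ℝ → ℂ) (ξ : ℝ) :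
    ∫ x : ℝ, F (Real.exp x) * Complex.exp (-(Complex.I * x * ξ)) =
      mellin F (-(Complex.I * ξ)) := by
  have h := integral_image_eq_integral_abs_deriv_smul (s := Set.univ) (f := Real.exp)
    (f' := Real.exp) MeasurableSet.univ
    (fun x _ => (Real.hasDerivAt_exp x).hasDerivWithinAt) Real.exp_injective.injOn
    (fun t : ℝ => (t : ℂ) ^ (-(Complex.I * ξ) - 1) • F t)
  rw [Set.image_univ, Real.range_exp, setIntegral_univ] at h
  rw [mellin, h]
  refine integral_congr_ae (Filter.Eventually.of_forall fun x => ?_)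
  have hx : (Real.exp x : ℂ) ≠ 0 := Complex.ofReal_ne_zero.mpr (Real.exp_ne_zero x)
  simp only [abs_of_pos (Real.exp_pos x), Complex.real_smul, smul_eq_mul]
  rw [Complex.cpow_sub _ _ hx, Complex.cpow_one, Complex.cpow_def_of_ne_zero hx,
    ← Complex.ofReal_log (Real.exp_pos x).le, Real.log_exp]
  field_simp

theorem IsTestFun.exists_eq_zero {f : ℝ → ℂ} (hf : IsTestFun f) :
    ∃ a : ℝ, 0 < a ∧ ∀ t < a, f t = 0 := by
  obtain ⟨_, hc, hs⟩ := hf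
  rcases (tsupport f).eq_empty_or_nonempty with he | hne
  · exact ⟨1, one_pos, fun t _ => image_eq_zero_of_notMem_tsupport (by simp [he])⟩
  · obtain ⟨a, ha, hmin⟩ := hc.isCompact.exists_isLeast hne
    exact ⟨a, hs ha, fun t ht => image_eq_zero_of_notMem_tsupport fun h => (hmin h).not_gt ht⟩

theorem IsTestFun.integrable {f : ℝ → ℂ} (hf : IsTestFun f) : Integrable f :=
  hf.1.continuous.integrable_of_hasCompactSupport hf.2.1

/-- The main identity: `√(2π) Γ(1+iξ) (ΦΩ)(ξ) = ((J ḡ₁) * g₂)(ξ)` with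
`Ω(x) = F(eˣ)`, `g_j(ξ) = Γ(1/2+iξ)(M f_j)(ξ)`, `Φ` the Fourier transform. -/
theorem main_identity_fourier_of_convolution (f₁ f₂ : ℝ → ℂ)
    (hf₁ : IsTestFun f₁) (hf₂ : IsTestFun f₂) (ξ : ℝ) :
    (Real.sqrt (2 * Real.pi) : ℂ) * Complex.Gamma (1 + Complex.I * ξ) *
        ((Real.sqrt (2 * Real.pi) : ℂ)⁻¹ *
          ∫ x : ℝ, laplaceConv f₁ f₂ (Real.exp x) * Complex.exp (-(Complex.I * x * ξ))) =
      ∫ η : ℝ,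
        (starRingEnd ℂ) (Complex.Gamma (1/2 + Complex.I * (η - ξ)) * mellinT f₁ (η - ξ)) *
          (Complex.Gamma (1/2 + Complex.I * η) * mellinT f₂ η) := by
  obtain ⟨a, ha, hfa₁⟩ := hf₁.exists_eq_zero
  obtain ⟨b, hb, hfb₂⟩ := hf₂.exists_eq_zero
  have hi₁ : IntegrableOn f₁ (Set.Ioi 0) := hf₁.integrable.integrableOn
  have hi₂ : IntegrableOn f₂ (Set.Ioi 0) := hf₂.integrable.integrableOn
  set k : ℝ → ℂ := fun t => (starRingEnd ℂ) (f₁ t) with hk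
  have hik : IntegrableOn k (Set.Ioi 0) := integrableOn_conj hi₁
  have hka : ∀ t < a, k t = 0 := fun t ht => by simp [hk, hfa₁ t ht]
  have hiF := integrableOn_laplaceConv hi₁ hi₂
  have hFa : ∀ t < a, laplaceConv f₁ f₂ t = 0 := fun t ht =>
    laplaceConv_eq_zero hfa₁ (fun u hu => hfb₂ u (hu.trans hb)) ht
  have hLF : mellin (laplaceT (laplaceConv f₁ f₂)) (1 + Complex.I * ξ) =
      mellin (fun p => laplaceT k p * laplaceT f₂ p) (1 + Complex.I * ξ) :=
    setIntegral_congr_fun measurableSet_Ioi fun p hp => by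
      simp only [laplaceT_laplaceConv hi₁ hi₂ (le_of_lt hp), hk]
  have hΓF := mellin_laplaceT (s := 1 + Complex.I * ξ) (by simp) hiF.aestronglyMeasurable
    (mellinConvergent_of_eq_zero hiF ha hFa (by simp))
  have hparseval := mellin_mul_eq_integral (σ := 1 / 2) (s := 1 + Complex.I * ξ)
    (mellinConvergent_laplaceT (f := k) (by norm_num) hik.aestronglyMeasurable
      (mellinConvergent_of_eq_zero hik ha hka (by norm_num)))
    (mellinConvergent_laplaceT (f := f₂) (by norm_num) hi₂.aestronglyMeasurable
      (mellinConvergent_of_eq_zero hi₂ hb hfb₂ (by norm_num)))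
    (verticalIntegrable_mellin_laplaceT (by norm_num) hi₂.aestronglyMeasurable
      fun s hs => mellinConvergent_of_eq_zero hi₂ hb hfb₂ (by rw [hs]; norm_num))
    (fun p hp => continuousAt_laplaceT hi₂ hp)
  have hpi : (Real.sqrt (2 * Real.pi) : ℂ) * Real.sqrt (2 * Real.pi) = 2 * Real.pi := by
    rw [← Complex.ofReal_mul, Real.mul_self_sqrt (by positivity)]
    push_cast
    rfl
  have hne : (Real.sqrt (2 * Real.pi) : ℂ) ≠ 0 :=
    Complex.ofReal_ne_zero.mpr (by positivity)
  have hexp : 1 - (1 + Complex.I * ξ) = -(Complex.I * ξ) := by ring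
  rw [hLF, hparseval, hexp] at hΓF
  rw [integral_comp_exp_mul_cexp, mul_mul_mul_comm, mul_inv_cancel₀ hne, one_mul, ← hΓF,
    ← integral_const_mul]
  refine integral_congr_ae (Filter.Eventually.of_forall fun η => ?_)
  have h₁ : mellin (laplaceT k) (1 + Complex.I * ξ - ((1 / 2 : ℝ) + η * Complex.I)) =
      (starRingEnd ℂ) (Complex.Gamma (1 / 2 + Complex.I * (η - ξ)) *
        mellin f₁ (1 / 2 - Complex.I * (η - ξ))) := by
    rw [mellin_laplaceT (by norm_num) hik.aestronglyMeasurable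
      (mellinConvergent_of_eq_zero hik ha hka (by norm_num)), map_mul, ← Complex.Gamma_conj,
      ← mellin_conj]
    congr 2
    · simp [Complex.conj_ofNat]
      ring
    · simp [Complex.conj_ofNat]
      ring
  have h₂ : mellin (laplaceT f₂) ((1 / 2 : ℝ) + η * Complex.I) =
      Complex.Gamma (1 / 2 + Complex.I * η) * mellin f₂ (1 / 2 - Complex.I * η) := by
    rw [mellin_laplaceT (by norm_num) hi₂.aestronglyMeasurable
      (mellinConvergent_of_eq_zero hi₂ hb hfb₂ (by norm_num))]
    congr 2
    · push_cast
      ring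
    · push_cast
      ring
  simp only
  rw [h₁, h₂, mellinT_eq_mellin, mellinT_eq_mellin, ← hpi]
  simp only [map_mul, map_inv₀, Complex.conj_ofReal, mul_inv, Complex.ofReal_sub]
  ring
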